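/- If x ~ t_d(μ, Σ, ν), ε = x − μ and δ = ε'Σ^{-1}ε, then E[(ν+δ)^{-2} ε ε'] = Σ / ((ν+d)(ν+d+2)). -/

import Mathlib

open MeasureTheory Matrix Set
open scoped Kronecker

noncomputable section

instance matrixMeasureSpace {m n : ℕ} : MeasureSpace (Matrix (Fin m) (Fin n) ℝ) :=
  inferInstanceAs (MeasureSpace ((Fin m) → (Fin n) → ℝ))

/-- Column-stacking vectorization of a matrix (indexed by (column, row)). -/
def vecM {dc dr : ℕ} (A : Matrix (Fin dc) (Fin dr) ℝ) : (Fin dr × Fin dc) → ℝ :=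
  fun p => A p.2 p.1

/-- Density of the multivariate t distribution `t_d(μ, S, ν)`. -/
def mvtPdf {n : Type*} [Fintype n] [DecidableEq n] (ν : ℝ) (μ : n → ℝ)
    (S : Matrix n n ℝ) (x : n → ℝ) : ℝ :=
  S.det ^ (-(1:ℝ)/2) * Real.Gamma ((ν + Fintype.card n) / 2) /
    ((Real.pi * ν) ^ ((Fintype.card n : ℝ) / 2) * Real.Gamma (ν / 2)) *
    (1 + (x - μ) ⬝ᵥ (S⁻¹ *ᵥ (x - μ)) / ν) ^ (-(ν + Fintype.card n) / 2)

/-- Density of the multivariate normal distribution `N(μ, S)`. -/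
def mvnPdf {n : Type*} [Fintype n] [DecidableEq n] (μ : n → ℝ)
    (S : Matrix n n ℝ) (x : n → ℝ) : ℝ :=
  (2 * Real.pi) ^ (-(Fintype.card n : ℝ) / 2) * S.det ^ (-(1:ℝ)/2) *
    Real.exp (-((x - μ) ⬝ᵥ (S⁻¹ *ᵥ (x - μ))) / 2)

/-- Density of the matrix-variate t distribution `Mt_{dc,dr}(W, Sc, Sr, ν)`. -/
def matTPdf {dc dr : ℕ} (ν : ℝ) (W : Matrix (Fin dc) (Fin dr) ℝ)
    (Sc : Matrix (Fin dc) (Fin dc) ℝ) (Sr : Matrix (Fin dr) (Fin dr) ℝ)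
    (X : Matrix (Fin dc) (Fin dr) ℝ) : ℝ :=
  Sc.det ^ (-(dr : ℝ) / 2) * Sr.det ^ (-(dc : ℝ) / 2) *
    Real.Gamma ((ν + dc * dr) / 2) /
    ((Real.pi * ν) ^ ((dc * dr : ℕ) / (2:ℝ)) * Real.Gamma (ν / 2)) *
    (1 + (Sc⁻¹ * (X - W) * Sr⁻¹ * (X - W)ᵀ).trace / ν) ^ (-(ν + dc * dr) / 2)

/-- Density of the matrix-normal distribution `N_{p,q}(M, U, V)`. -/
def matNormPdf {p q : ℕ} (M : Matrix (Fin p) (Fin q) ℝ) (U : Matrix (Fin p) (Fin p) ℝ)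
    (V : Matrix (Fin q) (Fin q) ℝ) (X : Matrix (Fin p) (Fin q) ℝ) : ℝ :=
  mvnPdf (vecM M) (V ⊗ₖ U) (vecM X)

/-- Density of the Gamma(shape a, rate b) distribution (on `(0,∞)`). -/
def gammaPdf (a b x : ℝ) : ℝ :=
  if 0 < x then b ^ a / Real.Gamma a * x ^ (a - 1) * Real.exp (-(b * x)) else 0

/-- Density of the Beta(a, b) distribution. -/
def betaPdf (a b x : ℝ) : ℝ :=
  if 0 < x ∧ x < 1 then
    Real.Gamma (a + b) / (Real.Gamma a * Real.Gamma b) * x ^ (a - 1) * (1 - x) ^ (b - 1)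
  else 0

/-- Density of the F distribution with `d` and `ν` degrees of freedom. -/
def fPdf (d ν x : ℝ) : ℝ :=
  if 0 < x then
    Real.Gamma ((d + ν) / 2) / (Real.Gamma (d / 2) * Real.Gamma (ν / 2)) *
      (d / ν) ^ (d / 2) * x ^ (d / 2 - 1) * (1 + d * x / ν) ^ (-(d + ν) / 2)
  else 0

lemma integral_sq_mul_exp_neg_sq : ∫ x : ℝ, x ^ 2 * Real.exp (-x ^ 2) = √Real.pi / 2 := by
  have h := integral_comp_abs (f := fun x : ℝ => x ^ (2 : ℝ) * Real.exp (-1 * x ^ (2 : ℝ)))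
  rw [integral_rpow_mul_exp_neg_mul_rpow two_pos (by norm_num) one_pos] at h
  have hG : Real.Gamma (((2 : ℝ) + 1) / 2) = √Real.pi / 2 := by
    rw [show ((2 : ℝ) + 1) / 2 = 1 / 2 + 1 by norm_num, Real.Gamma_add_one (by norm_num),
      Real.Gamma_one_half_eq]
    ring
  rw [hG] at h
  simp only [Real.rpow_two, sq_abs, neg_one_mul, Real.one_rpow] at h
  rw [h]
  ring

lemma integral_mul_exp_neg_sq : ∫ x : ℝ, x * Real.exp (-x ^ 2) = 0 := by
  have h := integral_neg_eq_self (fun x : ℝ => x * Real.exp (-x ^ 2)) volume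
  simp only [even_two, Even.neg_pow, neg_mul, integral_neg] at h
  linarith

lemma integral_exp_neg_sq : ∫ x : ℝ, Real.exp (-x ^ 2) = √Real.pi := by
  simpa using integral_gaussian 1

lemma integrable_pow_mul_exp_neg_sq (n : ℕ) :
    Integrable fun x : ℝ => x ^ n * Real.exp (-x ^ 2) := by
  have h := integrable_rpow_mul_exp_neg_mul_sq one_pos
    (show (-1 : ℝ) < n from neg_one_lt_zero.trans_le n.cast_nonneg)
  simpa using h

lemma continuous_mul_mul_exp_neg_quadratic {ι : Type*} [Fintype ι] (A : Matrix ι ι ℝ) (i j : ι) :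
    Continuous fun y : ι → ℝ => y i * y j * Real.exp (-(y ⬝ᵥ (A *ᵥ y))) := by
  fun_prop

section Gaussian

variable {ι : Type*} [Fintype ι] [DecidableEq ι]

lemma mul_mul_exp_neg_dotProduct_eq_prod (k l : ι) (z : ι → ℝ) :
    z k * z l * Real.exp (-(z ⬝ᵥ z)) =
      ∏ m, z m ^ ((if m = k then 1 else 0) + if m = l then 1 else 0) * Real.exp (-z m ^ 2) := by
  rw [Finset.prod_mul_distrib, ← Real.exp_sum, Finset.sum_neg_distrib]
  simp_rw [pow_add, Finset.prod_mul_distrib, pow_ite, pow_one, pow_zero]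
  simp [dotProduct, sq]

lemma integrable_mul_mul_exp_neg_dotProduct (k l : ι) :
    Integrable fun z : ι → ℝ => z k * z l * Real.exp (-(z ⬝ᵥ z)) := by
  simp only [mul_mul_exp_neg_dotProduct_eq_prod]
  exact Integrable.fintype_prod (f := fun (m : ι) (x : ℝ) =>
    x ^ ((if m = k then 1 else 0) + if m = l then 1 else 0) * Real.exp (-x ^ 2))
    fun m => integrable_pow_mul_exp_neg_sq _

lemma integral_mul_mul_exp_neg_dotProduct (k l : ι) :
    ∫ z : ι → ℝ, z k * z l * Real.exp (-(z ⬝ᵥ z)) =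
      if k = l then Real.pi ^ ((Fintype.card ι : ℝ) / 2) / 2 else 0 := by
  simp only [mul_mul_exp_neg_dotProduct_eq_prod]
  rw [integral_fintype_prod_volume_eq_prod (fun (m : ι) (x : ℝ) =>
    x ^ ((if m = k then 1 else 0) + if m = l then 1 else 0) * Real.exp (-x ^ 2))]
  split_ifs with h
  · subst h
    have hm (m : ι) : ∫ x : ℝ, x ^ ((if m = k then 1 else 0) + if m = k then 1 else 0) *
        Real.exp (-x ^ 2) = √Real.pi * if m = k then 1 / 2 else 1 := by
      split_ifs
      · simpa [div_eq_mul_inv] using integral_sq_mul_exp_neg_sq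
      · simpa using integral_exp_neg_sq
    simp only [hm]
    rw [Finset.prod_mul_distrib, Finset.prod_const, Finset.card_univ, Real.sqrt_eq_rpow,
      ← Real.rpow_mul_natCast Real.pi_pos.le,
      Finset.prod_ite_eq' Finset.univ k fun _ => (1 / 2 : ℝ)]
    simp [div_eq_mul_inv, mul_comm]
  · refine Finset.prod_eq_zero (Finset.mem_univ k) ?_
    simpa [h] using integral_mul_exp_neg_sq

open scoped MatrixOrder Matrix.Norms.L2Operator in
/-- A positive definite real matrix factors as `L * Lᵀ` with `L` invertible. -/
lemma Matrix.PosDef.exists_eq_mul_transpose {S : Matrix ι ι ℝ} (hS : S.PosDef) :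
    ∃ L : Matrix ι ι ℝ, L.det ≠ 0 ∧ S = L * Lᵀ := by
  obtain ⟨B, hB⟩ := CStarAlgebra.nonneg_iff_eq_star_mul_self.mp hS.posSemidef.nonneg
  refine ⟨Bᵀ, fun h => hS.det_pos.ne' ?_, by simpa [star_eq_conjTranspose] using hB⟩
  rw [hB, det_mul, ← det_transpose B, h, mul_zero]

lemma mulVec_dotProduct_inv_mulVec {L : Matrix ι ι ℝ} (hL : L.det ≠ 0) (z : ι → ℝ) :
    (L *ᵥ z) ⬝ᵥ ((L * Lᵀ)⁻¹ *ᵥ (L *ᵥ z)) = z ⬝ᵥ z := by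
  have hu : IsUnit L.det := hL.isUnit
  have hu' : IsUnit Lᵀ.det := by rwa [det_transpose]
  rw [mulVec_mulVec, Matrix.mul_inv_rev, Matrix.mul_assoc, Matrix.nonsing_inv_mul _ hu,
    Matrix.mul_one, dotProduct_mulVec, ← vecMul_transpose, vecMul_vecMul,
    Matrix.mul_nonsing_inv _ hu', vecMul_one]

lemma mulVec_mul_mulVec_mul_exp (L : Matrix ι ι ℝ) (hL : L.det ≠ 0) (i j : ι) (z : ι → ℝ) :
    (L *ᵥ z) i * (L *ᵥ z) j * Real.exp (-((L *ᵥ z) ⬝ᵥ ((L * Lᵀ)⁻¹ *ᵥ (L *ᵥ z)))) =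
      ∑ k, ∑ l, L i k * L j l * (z k * z l * Real.exp (-(z ⬝ᵥ z))) := by
  rw [mulVec_dotProduct_inv_mulVec hL]
  simp only [mulVec, dotProduct]
  rw [Finset.sum_mul_sum, Finset.sum_mul]
  refine Finset.sum_congr rfl fun k _ => ?_
  rw [Finset.sum_mul]
  exact Finset.sum_congr rfl fun l _ => by ring

lemma integrable_mul_mul_exp_neg_inv {S : Matrix ι ι ℝ} (hS : S.PosDef) (i j : ι) :
    Integrable fun y : ι → ℝ => y i * y j * Real.exp (-(y ⬝ᵥ (S⁻¹ *ᵥ y))) := by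
  obtain ⟨L, hL, rfl⟩ := hS.exists_eq_mul_transpose
  have hmap := Real.map_matrix_volume_pi_eq_smul_volume_pi hL
  have hc : ENNReal.ofReal |L.det⁻¹| ≠ 0 := by simpa using hL
  rw [← integrable_smul_measure hc ENNReal.ofReal_ne_top, ← hmap, integrable_map_measure
    (continuous_mul_mul_exp_neg_quadratic _ i j).aestronglyMeasurable
    (Matrix.toLin' L).continuous_of_finiteDimensional.aemeasurable]
  simp only [Function.comp_def, toLin'_apply, mulVec_mul_mulVec_mul_exp L hL]
  exact integrable_finsetSum _ fun k _ => integrable_finsetSum _ fun l _ =>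
    (integrable_mul_mul_exp_neg_dotProduct k l).const_mul _

lemma integral_mul_mul_exp_neg_inv {S : Matrix ι ι ℝ} (hS : S.PosDef) (i j : ι) :
    ∫ y : ι → ℝ, y i * y j * Real.exp (-(y ⬝ᵥ (S⁻¹ *ᵥ y))) =
      S.det ^ ((1 : ℝ) / 2) * (Real.pi ^ ((Fintype.card ι : ℝ) / 2) / 2) * S i j := by
  obtain ⟨L, hL, rfl⟩ := hS.exists_eq_mul_transpose
  have hmap := Real.map_matrix_volume_pi_eq_smul_volume_pi hL
  have hdet : (L * Lᵀ).det ^ ((1 : ℝ) / 2) = |L.det| := by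
    rw [det_mul, det_transpose, ← Real.sqrt_eq_rpow, Real.sqrt_mul_self_eq_abs]
  have h := integral_map (μ := volume)
    (Matrix.toLin' L).continuous_of_finiteDimensional.aemeasurable
    (continuous_mul_mul_exp_neg_quadratic (L * Lᵀ)⁻¹ i j).aestronglyMeasurable
  rw [hmap, integral_smul_measure, ENNReal.toReal_ofReal (abs_nonneg _)] at h
  simp only [toLin'_apply, mulVec_mul_mulVec_mul_exp L hL] at h
  rw [integral_finsetSum _ fun k _ => integrable_finsetSum _ fun l _ =>
    (integrable_mul_mul_exp_neg_dotProduct k l).const_mul _] at h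
  have hk (k : ι) : ∫ z : ι → ℝ, ∑ l, L i k * L j l * (z k * z l * Real.exp (-(z ⬝ᵥ z))) =
      Real.pi ^ ((Fintype.card ι : ℝ) / 2) / 2 * (L i k * L j k) := by
    rw [integral_finsetSum _ fun l _ => (integrable_mul_mul_exp_neg_dotProduct k l).const_mul _]
    simp only [integral_const_mul, integral_mul_mul_exp_neg_dotProduct, mul_ite, mul_zero,
      Finset.sum_ite_eq, Finset.mem_univ, if_true]
    ring
  simp only [hk, ← Finset.mul_sum, abs_inv, smul_eq_mul] at h
  rw [inv_mul_eq_iff_eq_mul₀ (abs_ne_zero.mpr hL)] at h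
  rw [h, hdet, mul_apply, mul_assoc]
  simp [transpose_apply]

end Gaussian

section GammaMixture

variable {E : Type*} [NormedAddCommGroup E] [NormedSpace ℝ E] [FiniteDimensional ℝ E]
  [MeasurableSpace E] [BorelSpace E] {m : Measure E} [m.IsAddHaarMeasure]

/-- Scaling of a Gaussian-type integral of a function homogeneous of degree two. -/
lemma integral_homogeneous_mul_exp_neg_mul {f q : E → ℝ}
    (hf : ∀ (c : ℝ) y, f (c • y) = c ^ 2 * f y) (hq : ∀ (c : ℝ) y, q (c • y) = c ^ 2 * q y)
    {t : ℝ} (ht : 0 < t) :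
    ∫ y, f y * Real.exp (-(t * q y)) ∂m =
      t ^ (-(1 + (Module.finrank ℝ E : ℝ) / 2)) * ∫ y, f y * Real.exp (-q y) ∂m := by
  have h := Measure.integral_comp_smul m (fun y => f y * Real.exp (-q y)) √t
  simp only [hf, hq, Real.sq_sqrt ht.le, mul_assoc, integral_const_mul, smul_eq_mul] at h
  have ht' : t ^ (-(1 + (Module.finrank ℝ E : ℝ) / 2)) =
      t⁻¹ * |(√t ^ Module.finrank ℝ E)⁻¹| := by
    rw [abs_of_nonneg (by positivity), Real.sqrt_eq_rpow, ← Real.rpow_mul_natCast ht.le,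
      neg_add, Real.rpow_add ht, Real.rpow_neg_one, ← Real.rpow_neg ht.le]
    congr 2
    ring
  rw [ht', mul_assoc, ← h, inv_mul_cancel_left₀ ht.ne']

lemma integrable_homogeneous_mul_exp_neg_mul {f q : E → ℝ}
    (hf : ∀ (c : ℝ) y, f (c • y) = c ^ 2 * f y) (hq : ∀ (c : ℝ) y, q (c • y) = c ^ 2 * q y)
    (hfq : Integrable (fun y => f y * Real.exp (-q y)) m) {t : ℝ} (ht : 0 < t) :
    Integrable (fun y => f y * Real.exp (-(t * q y))) m := by
  have h := (hfq.comp_smul (Real.sqrt_pos.mpr ht).ne').const_mul t⁻¹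
  simpa only [hf, hq, Real.sq_sqrt ht.le, mul_assoc, inv_mul_cancel_left₀ ht.ne'] using h

lemma integrableOn_rpow_mul_exp_neg_mul {a r : ℝ} (ha : 0 < a) (hr : 0 < r) :
    IntegrableOn (fun t : ℝ => t ^ (a - 1) * Real.exp (-(r * t))) (Ioi 0) := by
  have hG := Real.Gamma_pos_of_pos ha
  refine .of_integral_ne_zero ?_
  rw [Real.integral_rpow_mul_exp_neg_mul_Ioi ha hr]
  positivity

/-- Writing `(ν + q) ^ (-p)` as a Gamma mixture of exponentials reduces its integral against a
function homogeneous of degree two to a Gaussian-type integral. -/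
lemma integral_homogeneous_mul_rpow_neg {f q : E → ℝ}
    (hf : ∀ (c : ℝ) y, f (c • y) = c ^ 2 * f y) (hq : ∀ (c : ℝ) y, q (c • y) = c ^ 2 * q y)
    (hfc : Continuous f) (hqc : Continuous q) (hq0 : ∀ y, 0 ≤ q y)
    (hfq : Integrable (fun y => f y * Real.exp (-q y)) m) {ν a : ℝ} (hν : 0 < ν) (ha : 0 < a) :
    ∫ y, f y * (ν + q y) ^ (-(a + 1 + (Module.finrank ℝ E : ℝ) / 2)) ∂m =
      Real.Gamma a / Real.Gamma (a + 1 + (Module.finrank ℝ E : ℝ) / 2) * ν ^ (-a) *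
        ∫ y, f y * Real.exp (-q y) ∂m := by
  set p : ℝ := a + 1 + (Module.finrank ℝ E : ℝ) / 2 with hp
  have hp0 : 0 < p := by positivity
  have hG : Real.Gamma p ≠ 0 := (Real.Gamma_pos_of_pos hp0).ne'
  have hexp (t : ℝ) (y : E) : t ^ (p - 1) * Real.exp (-((ν + q y) * t)) * f y =
      t ^ (p - 1) * Real.exp (-(ν * t)) * (f y * Real.exp (-(t * q y))) := by
    rw [show -((ν + q y) * t) = -(ν * t) + -(t * q y) by ring, Real.exp_add]
    ring
  have hpow {t : ℝ} (ht : 0 < t) (C : ℝ) : t ^ (p - 1) * Real.exp (-(ν * t)) *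
      (t ^ (-(1 + (Module.finrank ℝ E : ℝ) / 2)) * C) =
      t ^ (a - 1) * Real.exp (-(ν * t)) * C := by
    rw [show a - 1 = p - 1 + -(1 + (Module.finrank ℝ E : ℝ) / 2) by rw [hp]; ring,
      Real.rpow_add ht]
    ring
  have hmix (y : E) : f y * (ν + q y) ^ (-p) =
      (Real.Gamma p)⁻¹ * ∫ t in Ioi (0 : ℝ), t ^ (p - 1) * Real.exp (-((ν + q y) * t)) * f y := by
    have hy : 0 < ν + q y := add_pos_of_pos_of_nonneg hν (hq0 y)
    rw [integral_mul_const, Real.integral_rpow_mul_exp_neg_mul_Ioi hp0 hy, one_div,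
      Real.inv_rpow hy.le, Real.rpow_neg hy.le]
    field_simp
  have hint : Integrable (Function.uncurry fun (t : ℝ) (y : E) =>
      t ^ (p - 1) * Real.exp (-((ν + q y) * t)) * f y)
      ((volume.restrict (Ioi 0)).prod m) := by
    have hmeas : Measurable (Function.uncurry fun (t : ℝ) (y : E) =>
        t ^ (p - 1) * Real.exp (-((ν + q y) * t)) * f y) := by
      have := hfc.measurable
      have := hqc.measurable
      unfold Function.uncurry
      fun_prop
    rw [integrable_prod_iff hmeas.aestronglyMeasurable]
    constructor
    · refine (ae_restrict_iff' measurableSet_Ioi).mpr (ae_of_all _ fun t ht => ?_)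
      simp only [Function.uncurry, hexp]
      exact (integrable_homogeneous_mul_exp_neg_mul hf hq hfq ht).const_mul _
    · refine IntegrableOn.congr_fun ((integrableOn_rpow_mul_exp_neg_mul ha hν).mul_const
        (∫ y, |f y| * Real.exp (-q y) ∂m)) (fun t ht => ?_) measurableSet_Ioi
      have ht : 0 < t := ht
      have habs (c : ℝ) (y : E) : |f (c • y)| = c ^ 2 * |f y| := by
        rw [hf, abs_mul, abs_of_nonneg (sq_nonneg c)]
      simp only [Function.uncurry, hexp, Real.norm_eq_abs, abs_mul, Real.abs_exp,
        abs_of_nonneg (Real.rpow_nonneg ht.le _), integral_const_mul]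
      rw [integral_homogeneous_mul_exp_neg_mul (f := fun y => |f y|) habs hq ht, hpow ht]
  simp only [hmix, integral_const_mul]
  rw [← integral_integral_swap hint, setIntegral_congr_fun measurableSet_Ioi
    (g := fun t => t ^ (a - 1) * Real.exp (-(ν * t)) * ∫ y, f y * Real.exp (-q y) ∂m)
    fun t ht => ?_]
  · rw [integral_mul_const, Real.integral_rpow_mul_exp_neg_mul_Ioi ha hν, one_div,
      Real.inv_rpow hν.le, Real.rpow_neg hν.le]
    ring
  · simp only [hexp, integral_const_mul]
    rw [integral_homogeneous_mul_exp_neg_mul hf hq ht, hpow ht]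

end GammaMixture

/-- if `x ~ t_d(μ, Σ, ν)`, then `E[(ν+δ)⁻² ε ε'] = Σ/((ν+d)(ν+d+2))`
(entrywise). -/
theorem expect_weighted_outer_second {d : ℕ} (ν : ℝ) (hν : 0 < ν)
    (μ : Fin d → ℝ) (S : Matrix (Fin d) (Fin d) ℝ) (hS : S.PosDef) :
    ∀ i j : Fin d,
      (∫ x : Fin d → ℝ,
          ((ν + (x - μ) ⬝ᵥ (S⁻¹ *ᵥ (x - μ))) ^ 2)⁻¹ * ((x i - μ i) * (x j - μ j)) *
            mvtPdf ν μ S x) = S i j / ((ν + d) * (ν + d + 2)) := by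
  intro i j
  set q : (Fin d → ℝ) → ℝ := fun y => y ⬝ᵥ (S⁻¹ *ᵥ y) with hqdef
  have hq0 (y : Fin d → ℝ) : 0 ≤ q y := by
    simpa using hS.inv.posSemidef.dotProduct_mulVec_nonneg y
  have hq (c : ℝ) (y : Fin d → ℝ) : q (c • y) = c ^ 2 * q y := by
    simp only [hqdef, mulVec_smul, dotProduct_smul, smul_dotProduct, smul_eq_mul]
    ring
  have hf (c : ℝ) (y : Fin d → ℝ) : (c • y) i * (c • y) j = c ^ 2 * (y i * y j) := by
    simp only [Pi.smul_apply, smul_eq_mul]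
    ring
  have hqc : Continuous q := by fun_prop
  have hmain := integral_homogeneous_mul_rpow_neg (m := volume) (f := fun y => y i * y j) hf hq
    (by fun_prop) hqc hq0 (integrable_mul_mul_exp_neg_inv hS i j) hν
    (show 0 < ν / 2 + 1 by positivity)
  rw [integral_mul_mul_exp_neg_inv hS i j, Module.finrank_fin_fun, Fintype.card_fin] at hmain
  set K : ℝ := S.det ^ (-(1:ℝ)/2) * Real.Gamma ((ν + d) / 2) /
    ((Real.pi * ν) ^ ((d : ℝ) / 2) * Real.Gamma (ν / 2)) with hK
  have hpt (y : Fin d → ℝ) : ((ν + q y) ^ 2)⁻¹ * (y i * y j) *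
      (K * (1 + q y / ν) ^ (-(ν + d) / 2)) =
      K * ν ^ ((ν + d) / 2) * (y i * y j * (ν + q y) ^ (-(ν / 2 + 1 + 1 + (d : ℝ) / 2))) := by
    have hy : 0 < ν + q y := add_pos_of_pos_of_nonneg hν (hq0 y)
    rw [show 1 + q y / ν = (ν + q y) / ν by field_simp, Real.div_rpow hy.le hν.le,
      show -(ν / 2 + 1 + 1 + (d : ℝ) / 2) = -(ν + d) / 2 + -(2 : ℕ) by push_cast; ring,
      Real.rpow_add hy, Real.rpow_neg hy.le, Real.rpow_natCast, neg_div (2 : ℝ) (ν + d),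
      Real.rpow_neg hν.le]
    field_simp
  calc _ = ∫ y, ((ν + q y) ^ 2)⁻¹ * (y i * y j) * (K * (1 + q y / ν) ^ (-(ν + d) / 2)) := by
        rw [← integral_sub_right_eq_self (fun y : Fin d → ℝ => ((ν + q y) ^ 2)⁻¹ * (y i * y j) *
          (K * (1 + q y / ν) ^ (-(ν + d) / 2))) μ]
        simp only [mvtPdf, Fintype.card_fin, hK, hqdef, Pi.sub_apply]
    _ = _ := ?_
  simp only [hpt]
  rw [integral_const_mul, hmain, hK]
  have hdet := hS.det_pos
  have hs : 0 < (ν + d) / 2 := by positivity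
  have hG := (Real.Gamma_pos_of_pos hs).ne'
  have hGν := (Real.Gamma_pos_of_pos (half_pos hν)).ne'
  rw [show ν / 2 + 1 + 1 + (d : ℝ) / 2 = (ν + d) / 2 + 1 + 1 by ring,
    Real.Gamma_add_one (add_pos hs one_pos).ne', Real.Gamma_add_one hs.ne',
    Real.Gamma_add_one (half_pos hν).ne', Real.mul_rpow Real.pi_pos.le hν.le,
    show (ν + (d : ℝ)) / 2 = ν / 2 + d / 2 by ring, Real.rpow_add hν, neg_add, Real.rpow_add hν,
    Real.rpow_neg hν.le, Real.rpow_neg_one, neg_div, Real.rpow_neg hdet.le]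
  rw [show (ν + (d : ℝ)) / 2 = ν / 2 + d / 2 by ring] at hG
  have h1 := (Real.rpow_pos_of_pos hdet (1 / 2)).ne'
  have h2 := (Real.rpow_pos_of_pos Real.pi_pos ((d : ℝ) / 2)).ne'
  have h3 := (Real.rpow_pos_of_pos hν ((d : ℝ) / 2)).ne'
  have h4 := (Real.rpow_pos_of_pos hν (ν / 2)).ne'
  have h5 : ν + d ≠ 0 := by positivity
  have h6 : ν + d + 2 ≠ 0 := by positivity
  field_simp
end
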